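/- arXiv:1712.03888 — 4 statements merged into one kernel-verified Lean document; each statement's English description precedes it below -/
import Mathlib

section
/- Let α, β, a be positive real numbers and L_f, L_g nonnegative real numbers. There exist positive real numbers γ and δ such that 1 − α·a/γ > 0, 1 − β·L_f/2 − β·a·δ > 0, 1 − α·L_g/2 − α·a/δ > 0, and 1 − β·L_f/2 − β·a·γ > 0, if and only if α·L_g < 2, β·L_f < 2, and α·β·(a² − L_f·L_g/4) + α·L_g/2 + β·L_f/2 < 1. -/
/-- equivalence between the existence of auxiliary positive parameters `γ, δ`
making all coefficients in the convergence estimate of the explicit scheme positive, and the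
stepsize conditions of the convergence theorem (`a` plays the role of `‖A‖`). -/
theorem explicit_parameter_equivalence
    (α β a Lf Lg : ℝ) (hα : 0 < α) (hβ : 0 < β) (ha : 0 < a)
    (hLf : 0 ≤ Lf) (hLg : 0 ≤ Lg) :
    (∃ γ δ : ℝ, 0 < γ ∧ 0 < δ ∧
      0 < 1 - α * a / γ ∧
      0 < 1 - β * Lf / 2 - β * a * δ ∧
      0 < 1 - α * Lg / 2 - α * a / δ ∧
      0 < 1 - β * Lf / 2 - β * a * γ) ↔
    (α * Lg < 2 ∧ β * Lf < 2 ∧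
      α * β * (a ^ 2 - Lf * Lg / 4) + α * Lg / 2 + β * Lf / 2 < 1) := by
  constructor
  · rintro ⟨γ, δ, hγ, hδ, -, h2, h3, -⟩
    have e1 : 0 < β * a * δ := by positivity
    have e2 : 0 < α * a / δ := by positivity
    refine ⟨by linarith, by linarith, ?_⟩
    have e3 : (β * a * δ) * (α * a / δ) < (1 - β * Lf / 2) * (1 - α * Lg / 2) :=
      mul_lt_mul'' (by linarith) (by linarith) e1.le e2.le
    have e4 : (β * a * δ) * (α * a / δ) = α * β * a ^ 2 := by
      field_simp
    rw [e4] at e3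
    nlinarith [e3]
  · rintro ⟨h1, h2, h3⟩
    have hp : 0 < 1 - α * Lg / 2 := by linarith
    have hp1 : 1 - α * Lg / 2 ≤ 1 := by
      have := mul_nonneg hα.le hLg
      linarith
    have hba : 0 < β * a := mul_pos hβ ha
    have key : α * a / (1 - α * Lg / 2) < (1 - β * Lf / 2) / (β * a) := by
      rw [div_lt_div_iff₀ hp hba]
      nlinarith [h3]
    obtain ⟨δ, hd1, hd2⟩ := exists_between key
    have hδ : 0 < δ := lt_trans (by positivity) hd1
    rw [div_lt_iff₀ hp] at hd1
    rw [lt_div_iff₀ hba] at hd2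
    have hd3 : α * a / δ < 1 - α * Lg / 2 := by
      rw [div_lt_iff₀ hδ]
      linarith
    exact ⟨δ, δ, hδ, hδ, by linarith, by linarith, by linarith, by linarith⟩
end

section
/- Let α, β be positive real numbers and L_f, L_g nonnegative real numbers. There exist positive real numbers γ and δ such that 1 − α/γ > 0, 1 − β·δ > 0, 1 − β·L_f/2 > 0, 1 − α·L_g/2 − α/δ > 0, and 1 − β·γ > 0, if and only if α·L_g < 2, β·L_f < 2, and α·β + α·L_g/2 < 1. -/
/-- equivalence between the existence of auxiliary positive parameters `γ, δ`
making all coefficients in the convergence estimate of the semi-implicit scheme positive, and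
the stepsize conditions of its convergence theorem. -/
theorem semi_implicit_parameter_equivalence
    (α β Lf Lg : ℝ) (hα : 0 < α) (hβ : 0 < β)
    (hLf : 0 ≤ Lf) (hLg : 0 ≤ Lg) :
    (∃ γ δ : ℝ, 0 < γ ∧ 0 < δ ∧
      0 < 1 - α / γ ∧
      0 < 1 - β * δ ∧
      0 < 1 - β * Lf / 2 ∧
      0 < 1 - α * Lg / 2 - α / δ ∧
      0 < 1 - β * γ) ↔
    (α * Lg < 2 ∧ β * Lf < 2 ∧ α * β + α * Lg / 2 < 1) := by
  constructor
  · rintro ⟨γ, δ, hγ, hδ, h1, h2, h3, h4, h5⟩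
    have h6 : 0 < α / δ := div_pos hα hδ
    have h7 : α * β < α / δ := by
      rw [lt_div_iff₀ hδ]
      nlinarith [mul_pos hα h2]
    refine ⟨by linarith, by linarith, by linarith⟩
  · rintro ⟨h1, h2, h3⟩
    have hab : 0 < α * β := mul_pos hα hβ
    have hag : 0 ≤ α * Lg := mul_nonneg hα.le hLg
    obtain ⟨t, ht1, ht2⟩ := exists_between (show α * β < 1 - α * Lg / 2 by linarith)
    have ht : 0 < t := hab.trans ht1
    have e : α / (α / t) = t := div_div_cancel₀ hα.ne'
    have hb : β * (α / t) < 1 := by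
      rw [← mul_div_assoc, div_lt_one ht]
      linarith
    refine ⟨α / t, α / t, div_pos hα ht, div_pos hα ht, ?_, ?_, ?_, ?_, ?_⟩ <;>
      (try rw [e]) <;> linarith
end

section
/- Let V, W be real Hilbert spaces and A : V → W a continuous linear map satisfying: for every nonempty closed convex set O ⊆ V with 0 ∈ O and every u ∈ V, ⟪A(u − Π_O u), A(Π_O u)⟫ ≥ 0. Let C ⊆ V be a nonempty closed convex set. Then for every w ∈ V and every u₀ ∈ C one has ⟪A w − A(Π_C w), A u₀ − A(Π_C w)⟫ ≤ 0. Consequently, if the image A(C) = { A u : u ∈ C } is closed (it is always convex), then A(Π_C w) is the orthogonal projection of A w onto A(C): A(Π_C w) = Π_{A(C)}(A w). -/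
open RealInnerProductSpace

/-- First claim, without assuming that `A '' C` is closed. -/
theorem image_inner_le_zero
    {V W : Type*} [NormedAddCommGroup V] [InnerProductSpace ℝ V]
    [NormedAddCommGroup W] [InnerProductSpace ℝ W]
    (A : V →L[ℝ] W)
    (hHa : ∀ O : Set V, O.Nonempty → IsClosed O → Convex ℝ O → (0 : V) ∈ O →
      ∀ u w : V, w ∈ O → (∀ z ∈ O, ⟪u - w, z - w⟫ ≤ 0) →
        0 ≤ ⟪A (u - w), A w⟫)
    (C : Set V) (hCclosed : IsClosed C) (hCconv : Convex ℝ C)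
    (w p : V) (hp : p ∈ C) (hproj : ∀ z ∈ C, ⟪w - p, z - p⟫ ≤ 0)
    (u₀ : V) (hu₀ : u₀ ∈ C) : ⟪A w - A p, A u₀ - A p⟫ ≤ 0 := by
  have h0 : (0 : V) ∈ (fun x => x + u₀) ⁻¹' C := by simpa using hu₀
  have h := hHa ((fun x => x + u₀) ⁻¹' C) ⟨0, h0⟩
    (hCclosed.preimage (by fun_prop)) (hCconv.translate_preimage_left u₀) h0
    (w - u₀) (p - u₀) (by simpa using hp) (by
      intro z hz
      have := hproj (z + u₀) hz
      rwa [show w - u₀ - (p - u₀) = w - p by abel,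
        show z - (p - u₀) = z + u₀ - p by abel])
  rw [show w - u₀ - (p - u₀) = w - p by abel, map_sub, map_sub] at h
  rw [← neg_sub (A p) (A u₀), inner_neg_right]
  linarith

/-- if the continuous linear map `A` satisfies hypothesis (Ha)
(for every nonempty closed convex `O ∋ 0` and every `u`, `⟪A(u − Π_O u), A(Π_O u)⟫ ≥ 0`),
then for every nonempty closed convex `C`, every `w` and every `u₀ ∈ C` one has
`⟪A w − A(Π_C w), A u₀ − A(Π_C w)⟫ ≤ 0`; consequently, if `A(C)` is closed then
`A(Π_C w)` is the orthogonal projection of `A w` onto `A(C)`. -/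
theorem image_of_projection_is_projection
    {V W : Type*} [NormedAddCommGroup V] [InnerProductSpace ℝ V] [CompleteSpace V]
    [NormedAddCommGroup W] [InnerProductSpace ℝ W] [CompleteSpace W]
    (A : V →L[ℝ] W)
    (hHa : ∀ O : Set V, O.Nonempty → IsClosed O → Convex ℝ O → (0 : V) ∈ O →
      ∀ u w : V, w ∈ O → (∀ z ∈ O, ⟪u - w, z - w⟫ ≤ 0) →
        0 ≤ ⟪A (u - w), A w⟫)
    (C : Set V) (hC : C.Nonempty) (hCclosed : IsClosed C) (hCconv : Convex ℝ C)
    (projC : V → V) (hprojC_mem : ∀ u, projC u ∈ C)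
    (hprojC : ∀ u, ∀ z ∈ C, ⟪u - projC u, z - projC u⟫ ≤ 0)
    (projAC : W → W) (hACclosed : IsClosed (A '' C))
    (hprojAC_mem : ∀ q, projAC q ∈ A '' C)
    (hprojAC : ∀ q, ∀ z ∈ A '' C, ⟪q - projAC q, z - projAC q⟫ ≤ 0) :
    (∀ w : V, ∀ u₀ ∈ C, ⟪A w - A (projC w), A u₀ - A (projC w)⟫ ≤ 0) ∧
    (∀ w : V, A (projC w) = projAC (A w)) := by
  have key : ∀ w : V, ∀ u₀ ∈ C, ⟪A w - A (projC w), A u₀ - A (projC w)⟫ ≤ 0 := fun w =>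
    image_inner_le_zero A hHa C hCclosed hCconv w (projC w) (hprojC_mem w) (hprojC w)
  refine ⟨key, fun w => ?_⟩
  obtain ⟨v, hv, hvq⟩ := hprojAC_mem (A w)
  have h1 := key w v hv
  have h2 := hprojAC (A w) (A (projC w)) ⟨_, hprojC_mem w, rfl⟩
  rw [hvq] at h1
  generalize projAC (A w) = q at *
  generalize A (projC w) = r at *
  have h3 : ⟪r - q, r - q⟫ ≤ 0 := by
    have e : ⟪r - q, r - q⟫ = ⟪A w - q, r - q⟫ + ⟪A w - r, q - r⟫ := by
      rw [← neg_sub r q, inner_neg_right, ← sub_eq_add_neg, ← inner_sub_left]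
      congr 1
      abel
    linarith
  exact sub_eq_zero.mp (inner_self_eq_zero (𝕜 := ℝ).mp (le_antisymm h3 real_inner_self_nonneg))
end

section
/- Let 0 < ε ≤ 2 and define the regularized gradient map h_ε : ℝ² → ℝ² by: h_ε(p) = 0 if ‖p‖ ≤ 1 − ε/2; h_ε(p) = ((2 + ε)/(2ε))·(‖p‖ + ε/2 − 1)·p/‖p‖ if |‖p‖ − 1| ≤ ε/2; and h_ε(p) = p if ‖p‖ ≥ 1 + ε/2. Then h_ε is Lipschitz continuous with constant (2 + ε)/(2ε): ‖h_ε(p) − h_ε(q)‖ ≤ ((2 + ε)/(2ε))·‖p − q‖ for all p, q ∈ ℝ². -/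
lemma radial_aux (p q : EuclideanSpace ℝ (Fin 2)) (a b K : ℝ) (ha : 0 ≤ a) (hb : 0 ≤ b)
    (haK : a ≤ K) (hbK : b ≤ K) (hab : (a * ‖p‖ - b * ‖q‖) ^ 2 ≤ K ^ 2 * (‖p‖ - ‖q‖) ^ 2) :
    ‖a • p - b • q‖ ≤ K * ‖p - q‖ := by
  have hK : 0 ≤ K := ha.trans haK
  apply le_of_sq_le_sq _ (by positivity)
  rw [mul_pow, norm_sub_sq_real, norm_sub_sq_real, norm_smul, norm_smul, real_inner_smul_left,
    real_inner_smul_right, Real.norm_of_nonneg ha, Real.norm_of_nonneg hb]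
  have h1 := real_inner_le_norm p q
  have h2 : a * b ≤ K * K := mul_le_mul haK hbK hb hK
  nlinarith [mul_nonneg (sub_nonneg.2 h1) (sub_nonneg.2 h2)]

lemma coef_aux (ε K r : ℝ) (hε2 : ε ≤ 2) (hK : K * ε = 1 + ε / 2) (hK1 : 1 ≤ K) (hr : 0 ≤ r)
    (g : ℝ → ℝ) (hg : g = fun r => if r ≤ 1 - ε / 2 then 0
      else if r ≤ 1 + ε / 2 then K * (r + ε / 2 - 1) / r else 1) :
    0 ≤ g r ∧ g r ≤ K ∧ g r * r = if r ≤ 1 - ε / 2 then 0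
      else if r ≤ 1 + ε / 2 then K * (r + ε / 2 - 1) else r := by
  subst hg
  dsimp only
  split_ifs with h1 h2
  · exact ⟨le_rfl, by linarith, by simp⟩
  · have hr' : 0 < r := by linarith
    refine ⟨div_nonneg (mul_nonneg (by linarith) (by linarith)) hr, ?_, by field_simp⟩
    rw [div_le_iff₀ hr']
    exact mul_le_mul_of_nonneg_left (by linarith) (by linarith)
  · exact ⟨by norm_num, hK1, by simp⟩

lemma lip_aux (ε K r s : ℝ) (hK : K * ε = 1 + ε / 2) (hK1 : 1 ≤ K) (hε0 : 0 < ε)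
    (hrs : r ≤ s) (G : ℝ → ℝ) (hG : G = fun r => if r ≤ 1 - ε / 2 then 0
      else if r ≤ 1 + ε / 2 then K * (r + ε / 2 - 1) else r) :
    G s - G r ≤ K * (s - r) ∧ -(K * (s - r)) ≤ G s - G r := by
  subst hG
  dsimp only
  have h0 : 0 ≤ K * (s - r) := mul_nonneg (by linarith) (by linarith)
  split_ifs with h1 h2 h3 h4 h5 h6 h7 <;> constructor <;> (try push Not at *) <;>
    first
    | linarith
    | nlinarith [mul_nonneg (sub_nonneg.2 hK1) (sub_nonneg.2 hrs)]
    | nlinarith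

/-- the `ε`-regularized gradient map `h_ε` of the Fenchel conjugate
`φ*(p) = (1/2)·max(‖p‖² − 1, 0)` — equal to `0` for `‖p‖ ≤ 1 − ε/2`, to
`((2+ε)/(2ε))·(‖p‖ + ε/2 − 1)·p/‖p‖` for `|‖p‖ − 1| ≤ ε/2`, and to `p` for
`‖p‖ ≥ 1 + ε/2` — is Lipschitz with constant `(2 + ε)/(2ε)`. -/
theorem regularized_gradient_lipschitz
    (ε : ℝ) (hε0 : 0 < ε) (hε2 : ε ≤ 2)
    (h : EuclideanSpace ℝ (Fin 2) → EuclideanSpace ℝ (Fin 2))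
    (hdef : ∀ p, h p =
      if ‖p‖ ≤ 1 - ε / 2 then 0
      else if ‖p‖ ≤ 1 + ε / 2 then
        ((2 + ε) / (2 * ε) * (‖p‖ + ε / 2 - 1) / ‖p‖) • p
      else p) :
    ∀ p q, ‖h p - h q‖ ≤ (2 + ε) / (2 * ε) * ‖p - q‖ := by
  intro p q
  set K := (2 + ε) / (2 * ε) with hKd
  have hK : K * ε = 1 + ε / 2 := by rw [hKd]; field_simp
  have hK1 : 1 ≤ K := by rw [hKd, le_div_iff₀ (by positivity)]; linarith
  obtain ⟨g, hg⟩ : ∃ g : ℝ → ℝ, g = fun r => if r ≤ 1 - ε / 2 then 0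
      else if r ≤ 1 + ε / 2 then K * (r + ε / 2 - 1) / r else 1 := ⟨_, rfl⟩
  obtain ⟨G, hG⟩ : ∃ G : ℝ → ℝ, G = fun r => if r ≤ 1 - ε / 2 then 0
      else if r ≤ 1 + ε / 2 then K * (r + ε / 2 - 1) else r := ⟨_, rfl⟩
  have hh : ∀ p, h p = g ‖p‖ • p := by
    intro p
    rw [hdef, hg]
    dsimp only
    split_ifs <;> simp
  obtain ⟨a1, a2, a3⟩ := coef_aux ε K ‖p‖ hε2 hK hK1 (norm_nonneg _) g hg
  obtain ⟨b1, b2, b3⟩ := coef_aux ε K ‖q‖ hε2 hK hK1 (norm_nonneg _) g hg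
  have a4 : g ‖p‖ * ‖p‖ = G ‖p‖ := by rw [a3, hG]
  have b4 : g ‖q‖ * ‖q‖ = G ‖q‖ := by rw [b3, hG]
  rw [hh, hh]
  apply radial_aux p q _ _ K a1 b1 a2 b2
  rw [a4, b4, ← mul_pow]
  rcases le_total ‖p‖ ‖q‖ with hl | hl
  · obtain ⟨c1, c2⟩ := lip_aux ε K _ _ hK hK1 hε0 hl G hG
    rw [sq_le_sq, abs_sub_comm, ← abs_neg (K * _)]
    exact (abs_le.2 ⟨c2, c1⟩).trans ((le_of_eq (by ring)).trans (le_abs_self _))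
  · obtain ⟨c1, c2⟩ := lip_aux ε K _ _ hK hK1 hε0 hl G hG
    rw [sq_le_sq]
    exact (abs_le.2 ⟨c2, c1⟩).trans (le_abs_self _)
end
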